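/- Let n ≥ 2 be an integer. Then, as ε → 0⁺, ∫_{ℂ^n×ℝ} (ε²(|z|⁴ + τ²) + |z|²) / ( ((1+ε²|z|²)² + ε⁴τ²) (τ² + (1+|z|²)²)^{n+1} ) dz dτ converges to ∫_{ℂ^n×ℝ} |z|² / (τ² + (1+|z|²)²)^{n+1} dz dτ. In particular the left-hand integral is finite for every ε ∈ (0,1) and equals the right-hand integral up to an error that tends to 0 as ε → 0⁺. -/

import Mathlib

open MeasureTheory Real Set Filter

/-- `normSq z = |z|²` for `z ∈ ℂⁿ`. -/
noncomputable def normSq {n : ℕ} (z : Fin n → ℂ) : ℝ := ∑ i, ‖z i‖ ^ 2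


lemma normSq_nonneg' {n : ℕ} (z : Fin n → ℂ) : 0 ≤ normSq z :=
  Finset.sum_nonneg fun i _ => by positivity

lemma normSq_cont {n : ℕ} : Continuous (normSq : (Fin n → ℂ) → ℝ) := by
  unfold normSq; fun_prop

lemma norm_sq_le_normSq {n : ℕ} (z : Fin n → ℂ) : ‖z‖ ^ 2 ≤ normSq z := by
  have h : ‖z‖ ≤ √(normSq z) := by
    rw [pi_norm_le_iff_of_nonneg (Real.sqrt_nonneg _)]
    intro i
    apply Real.le_sqrt_of_sq_le
    exact Finset.single_le_sum (f := fun i => ‖z i‖ ^ 2) (fun j _ => by positivity)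
      (Finset.mem_univ i)
  calc ‖z‖ ^ 2 ≤ √(normSq z) ^ 2 := by gcongr
    _ = normSq z := Real.sq_sqrt (normSq_nonneg' z)

lemma num_bound (e s t r : ℝ) (hs : 0 ≤ s) (hr : 0 < r) (h : r ^ 2 = t ^ 2 + (1 + s) ^ 2) :
    e ^ 2 * (s ^ 2 + t ^ 2) + s ≤ 2 * r * ((1 + e ^ 2 * s) ^ 2 + e ^ 4 * t ^ 2) := by
  have hsr : s ≤ r := by nlinarith [sq_nonneg t]
  obtain ⟨R, hR⟩ : ∃ R, R = s ^ 2 + t ^ 2 := ⟨_, rfl⟩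
  have hR0 : 0 ≤ R := by rw [hR]; positivity
  have hRr : R ≤ r ^ 2 := by rw [h, hR]; nlinarith
  have h1 : 0 ≤ r * (r + e ^ 4 * R * r - e ^ 2 * R) := by
    have e1 : 0 ≤ e ^ 4 * R * (r ^ 2 - R) := by
      have : 0 ≤ r ^ 2 - R := by linarith
      positivity
    have e2 : 0 ≤ e ^ 2 * R * r := by positivity
    nlinarith [sq_nonneg (r - e ^ 2 * R)]
  have h2 : 0 ≤ r + e ^ 4 * R * r - e ^ 2 * R := nonneg_of_mul_nonneg_right h1 hr
  have h3 : (1 + e ^ 2 * s) ^ 2 + e ^ 4 * t ^ 2 = 1 + 2 * (e ^ 2 * s) + e ^ 4 * R := by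
    rw [hR]; ring
  rw [h3, ← hR]
  have h4 : 0 ≤ r * (e ^ 2 * s) := by positivity
  have h5 : 0 ≤ r * (e ^ 4 * R) := by positivity
  nlinarith

lemma main_bound (n : ℕ) (hn : 2 ≤ n) (e : ℝ) (p : (Fin n → ℂ) × ℝ) :
    ‖(e ^ 2 * (normSq p.1 ^ 2 + p.2 ^ 2) + normSq p.1) /
          (((1 + e ^ 2 * normSq p.1) ^ 2 + e ^ 4 * p.2 ^ 2) *
            (p.2 ^ 2 + (1 + normSq p.1) ^ 2) ^ (n + 1))‖ ≤
      ((1 + ‖p.1‖ ^ 2) ^ (-(4 * n - 2 : ℝ) / 2)) * (2 * (1 + p.2 ^ 2)⁻¹) := by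
  have hs := normSq_nonneg' p.1
  have hz := norm_sq_le_normSq p.1
  generalize normSq p.1 = s at *
  generalize p.2 = t
  generalize ‖p.1‖ = a at *
  have hQ : 0 < t ^ 2 + (1 + s) ^ 2 := by positivity
  obtain ⟨r, hr, h⟩ : ∃ r : ℝ, 0 < r ∧ r ^ 2 = t ^ 2 + (1 + s) ^ 2 :=
    ⟨√(t ^ 2 + (1 + s) ^ 2), Real.sqrt_pos.2 hQ, Real.sq_sqrt hQ.le⟩
  have hb := num_bound e s t r hs hr h
  have hD : 0 < (1 + e ^ 2 * s) ^ 2 + e ^ 4 * t ^ 2 := by positivity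
  rw [Real.norm_of_nonneg (by positivity), ← h]
  have hexp : (-(4 * n - 2 : ℝ) / 2) = -((2 * n - 1 : ℕ) : ℝ) := by
    rw [Nat.cast_sub (by omega)]; push_cast; ring
  rw [hexp, Real.rpow_neg (by positivity), Real.rpow_natCast]
  have h1 : 1 + a ^ 2 ≤ r := by
    have : 1 + s ≤ r := by nlinarith [sq_nonneg t]
    linarith
  have h2 : 1 + t ^ 2 ≤ r ^ 2 := by rw [h]; nlinarith
  have h3 : (1 + a ^ 2) ^ (2 * n - 1) * (1 + t ^ 2) ≤ r ^ (2 * n - 1) * r ^ 2 := by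
    gcongr
  calc _ ≤ (2 * r * ((1 + e ^ 2 * s) ^ 2 + e ^ 4 * t ^ 2)) /
          (((1 + e ^ 2 * s) ^ 2 + e ^ 4 * t ^ 2) * (r ^ 2) ^ (n + 1)) := by gcongr
    _ = 2 / (r ^ (2 * n - 1) * r ^ 2) := by
      have : (r ^ 2) ^ (n + 1) = r * (r ^ (2 * n - 1) * r ^ 2) := by
        rw [← pow_mul, ← pow_add, ← pow_succ']
        congr 1; omega
      rw [this]
      field_simp
    _ ≤ 2 / ((1 + a ^ 2) ^ (2 * n - 1) * (1 + t ^ 2)) := by gcongr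
    _ = _ := by field_simp

lemma bound_integrable (n : ℕ) (hn : 2 ≤ n) : Integrable (fun p : (Fin n → ℂ) × ℝ =>
    ((1 + ‖p.1‖ ^ 2) ^ (-(4 * n - 2 : ℝ) / 2)) * (2 * (1 + p.2 ^ 2)⁻¹)) := by
  have h1 : Integrable (fun z : Fin n → ℂ => (1 + ‖z‖ ^ 2) ^ (-(4 * n - 2 : ℝ) / 2)) := by
    apply integrable_rpow_neg_one_add_norm_sq
    have : Module.finrank ℝ (Fin n → ℂ) = n * 2 := by
      rw [Module.finrank_pi_fintype]; simp
    rw [this]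
    have : (2 : ℝ) ≤ n := by exact_mod_cast hn
    push_cast; linarith
  exact h1.mul_prod (integrable_inv_one_add_sq.const_mul 2)

lemma integrand_cont (n : ℕ) (e : ℝ) : Continuous (fun p : (Fin n → ℂ) × ℝ =>
        (e ^ 2 * (normSq p.1 ^ 2 + p.2 ^ 2) + normSq p.1) /
          (((1 + e ^ 2 * normSq p.1) ^ 2 + e ^ 4 * p.2 ^ 2) *
            (p.2 ^ 2 + (1 + normSq p.1) ^ 2) ^ (n + 1))) := by
  have := normSq_cont (n := n)
  apply Continuous.div (by fun_prop) (by fun_prop)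
  intro p
  have hs := normSq_nonneg' p.1
  positivity

theorem stmt_13 (n : ℕ) (hn : 2 ≤ n) :
    (∀ ε ∈ Ioo (0 : ℝ) 1, Integrable (fun p : (Fin n → ℂ) × ℝ =>
        (ε ^ 2 * (normSq p.1 ^ 2 + p.2 ^ 2) + normSq p.1) /
          (((1 + ε ^ 2 * normSq p.1) ^ 2 + ε ^ 4 * p.2 ^ 2) *
            (p.2 ^ 2 + (1 + normSq p.1) ^ 2) ^ (n + 1)))) ∧
    Tendsto (fun ε : ℝ =>
        ∫ p : (Fin n → ℂ) × ℝ,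
          (ε ^ 2 * (normSq p.1 ^ 2 + p.2 ^ 2) + normSq p.1) /
            (((1 + ε ^ 2 * normSq p.1) ^ 2 + ε ^ 4 * p.2 ^ 2) *
              (p.2 ^ 2 + (1 + normSq p.1) ^ 2) ^ (n + 1)))
      (nhdsWithin 0 (Ioi 0))
      (nhds (∫ p : (Fin n → ℂ) × ℝ,
          normSq p.1 / (p.2 ^ 2 + (1 + normSq p.1) ^ 2) ^ (n + 1))) := by
  refine ⟨fun ε _ => (bound_integrable n hn).mono' (integrand_cont n ε).aestronglyMeasurable
    (Eventually.of_forall (main_bound n hn ε)), ?_⟩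
  refine tendsto_integral_filter_of_dominated_convergence _
    (Eventually.of_forall fun ε => (integrand_cont n ε).aestronglyMeasurable)
    (Eventually.of_forall fun ε => Eventually.of_forall (main_bound n hn ε))
    (bound_integrable n hn) (Eventually.of_forall fun p => ?_)
  have hs := normSq_nonneg' p.1
  have hc : Continuous (fun ε : ℝ => (ε ^ 2 * (normSq p.1 ^ 2 + p.2 ^ 2) + normSq p.1) /
          (((1 + ε ^ 2 * normSq p.1) ^ 2 + ε ^ 4 * p.2 ^ 2) *
            (p.2 ^ 2 + (1 + normSq p.1) ^ 2) ^ (n + 1))) := by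
    apply Continuous.div (by fun_prop) (by fun_prop)
    intro ε
    positivity
  have h0 := (hc.tendsto 0).mono_left (nhdsWithin_le_nhds (s := Ioi 0))
  simpa using h0
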